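/- For each index m, the gradient of the relative entropy C(Y) = Σ_{i≠j} p_{ij} log(p_{ij}/q_{ij}(Y)) with respect to the point y_m ∈ ℝ^s is given by ∇_{y_m} C(Y) = −4 Σ_{j ≠ m} (p_{mj} − q_{mj}(Y)) (y_m − y_j) (log β)'(|y_m − y_j|²). Equivalently, the gradient flow of C is the system dy_i/dt = 4 Σ_{j≠i} (p_{ij} − q_{ij}(Y)) (y_i − y_j) (log β)'(|y_i − y_j|²). -/

import Mathlib

open Filter Topology

/-- The normalizing constant `Z = Σ_{k ≠ ℓ} β(|y_k - y_ℓ|²)`. -/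
noncomputable def pairZ {E : Type*} [NormedAddCommGroup E] (β : ℝ → ℝ) {n : ℕ}
    (Y : Fin n → E) : ℝ :=
  ∑ k : Fin n, ∑ l : Fin n, if k ≠ l then β (‖Y k - Y l‖ ^ 2) else 0

/-- The low-dimensional similarity `q_{ij}(Y) = β(|y_i - y_j|²) / Z(Y)`. -/
noncomputable def qfun {E : Type*} [NormedAddCommGroup E] (β : ℝ → ℝ) {n : ℕ}
    (Y : Fin n → E) (i j : Fin n) : ℝ :=
  β (‖Y i - Y j‖ ^ 2) / pairZ β Y

/-- The derivative `(log β)'` on `[0, ∞)`. -/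
noncomputable def lbd (β : ℝ → ℝ) : ℝ → ℝ :=
  fun x => derivWithin (fun y => Real.log (β y)) (Set.Ici 0) x

/-- `Y : ℝ → Fin n → E` is a solution of the gradient flow of the relative entropy:
`dy_i/dt = 4 Σ_{j ≠ i} (p_{ij} - q_{ij}(Y)) (y_i - y_j) (log β)'(|y_i - y_j|²)` for `t ≥ 0`. -/
def IsGradFlow {E : Type*} [NormedAddCommGroup E] [NormedSpace ℝ E] (β : ℝ → ℝ) {n : ℕ}
    (p : Fin n → Fin n → ℝ) (Y : ℝ → Fin n → E) : Prop :=
  ∀ i : Fin n, ∀ t ∈ Set.Ici (0 : ℝ),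
    HasDerivWithinAt (fun u => Y u i)
      (∑ j ∈ Finset.univ.filter (· ≠ i),
        (4 * (p i j - qfun β (Y t) i j) * lbd β (‖Y t i - Y t j‖ ^ 2)) • (Y t i - Y t j))
      (Set.Ici 0) t

/-- The diameter of the configuration `Y`, i.e. `max_{i,j} |y_i - y_j|`. -/
noncomputable def diamY {E : Type*} [NormedAddCommGroup E] {n : ℕ} (Y : Fin n → E) : ℝ :=
  Metric.diam (Set.range Y)

/-- The relative entropy (Kullback–Leibler divergence)
`C(Y) = Σ_{i ≠ j} p_{ij} log(p_{ij} / q_{ij}(Y))`. -/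
noncomputable def relEntropy {E : Type*} [NormedAddCommGroup E] (β : ℝ → ℝ) {n : ℕ}
    (p : Fin n → Fin n → ℝ) (Y : Fin n → E) : ℝ :=
  ∑ i, ∑ j, if i ≠ j then p i j * Real.log (p i j / qfun β Y i j) else 0

/-!
Since `Σ_{i ≠ j} p_{ij} = 1`, expanding the logarithm in the relative entropy gives
`C(Y) = Σ_{i ≠ j} p_{ij} log p_{ij} - Σ_{i ≠ j} p_{ij} log β(|y_i - y_j|²) + log Z(Y)`.
The second sum and `Z` are both energies `Σ_{i ≠ j} w_{ij} φ(|y_i - y_j|²)`, for `w = p, φ = log β`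
and for `w = 1, φ = β`. Only the pairs `(m, j)` and `(j, m)` see the point `y_m`, so such an energy
has gradient `2 Σ_{j ≠ m} (w_{mj} + w_{jm}) φ'(|y_m - y_j|²) (y_m - y_j)`, and `β' / Z` turns into
`q (log β)'`.
-/

/-- The energy `Σ_{i ≠ j} w_{ij} φ(|y_i - y_j|²)` of the configuration `Y` under the pair
potential `φ` of the squared distance, with weights `w` on ordered pairs. -/
noncomputable def pairEnergy {ι E : Type*} [Fintype ι] [DecidableEq ι] [NormedAddCommGroup E]
    (w : ι → ι → ℝ) (φ : ℝ → ℝ) (Y : ι → E) : ℝ :=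
  ∑ i, ∑ j, if i ≠ j then w i j * φ (‖Y i - Y j‖ ^ 2) else 0

section PairEnergyGradient

variable {E : Type*} [NormedAddCommGroup E] [InnerProductSpace ℝ E] [CompleteSpace E]

lemma hasGradientAt_comp_norm_sub_sq {φ : ℝ → ℝ} {φ' : ℝ} {a x : E}
    (hφ : HasDerivWithinAt φ φ' (Set.Ici 0) (‖x - a‖ ^ 2)) :
    HasGradientAt (fun y => φ (‖y - a‖ ^ 2)) ((2 * φ') • (x - a)) x := by
  have hsq : HasFDerivAt (fun y => ‖y - a‖ ^ 2) (2 • innerSL ℝ (x - a)) x := by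
    simpa using ((hasFDerivAt_id (𝕜 := ℝ) x).sub_const a).norm_sq
  refine (hφ.comp_hasFDerivAt x hsq (.of_forall fun y => sq_nonneg ‖y - a‖)).congr_fderiv ?_
  ext v
  simp only [smul_apply, innerSL_apply_apply, InnerProductSpace.toDual_apply_apply,
    real_inner_smul_left, smul_eq_mul, nsmul_eq_mul]
  push_cast
  ring

variable {ι : Type*} [DecidableEq ι]

-- Indicators instead of cases let the sum over all `i, j` collapse to the pairs through `m`.
lemma hasGradientAt_comp_norm_update_sub_sq {φ φ' : ℝ → ℝ}
    (hφ : ∀ x, 0 ≤ x → HasDerivWithinAt φ (φ' x) (Set.Ici 0) x) (Y : ι → E) (m i j : ι) :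
    HasGradientAt (fun y => φ (‖Function.update Y m y i - Function.update Y m y j‖ ^ 2))
      ((if i = m then (2 * φ' (‖Y m - Y j‖ ^ 2)) • (Y m - Y j) else 0) +
        if j = m then (2 * φ' (‖Y m - Y i‖ ^ 2)) • (Y m - Y i) else 0) (Y m) := by
  have hgrad (k : ι) := hasGradientAt_comp_norm_sub_sq (hφ (‖Y m - Y k‖ ^ 2) (sq_nonneg _))
  obtain hi | hi := eq_or_ne i m <;> obtain hj | hj := eq_or_ne j m
  · simpa [hi, hj] using hasGradientAt_const (Y m) (φ 0)
  · simpa [hi, hj] using hgrad j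
  · simpa [hi, hj, norm_sub_rev (Y i)] using hgrad i
  · simpa [hi, hj] using hasGradientAt_const (Y m) (φ (‖Y i - Y j‖ ^ 2))

variable [Fintype ι]

lemma hasGradientAt_pairEnergy_update {φ φ' : ℝ → ℝ}
    (hφ : ∀ x, 0 ≤ x → HasDerivWithinAt φ (φ' x) (Set.Ici 0) x) (w : ι → ι → ℝ) (Y : ι → E)
    (m : ι) :
    HasGradientAt (fun y => pairEnergy w φ (Function.update Y m y))
      (∑ j with j ≠ m, (2 * (w m j + w j m) * φ' (‖Y m - Y j‖ ^ 2)) • (Y m - Y j)) (Y m) := by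
  set g : ι → E := fun j => (2 * φ' (‖Y m - Y j‖ ^ 2)) • (Y m - Y j) with hg
  have hpair (i j : ι) : HasFDerivAt
      (fun y => if i ≠ j then
        w i j * φ (‖Function.update Y m y i - Function.update Y m y j‖ ^ 2) else 0)
      (InnerProductSpace.toDual ℝ E
        (w i j • ((if i = m then g j else 0) + if j = m then g i else 0))) (Y m) := by
    rcases eq_or_ne i j with rfl | hij
    · have hdiag : (if i = m then g i else 0) = 0 := by
        split_ifs with him <;> simp [hg, him]
      simpa [hdiag] using hasFDerivAt_const (𝕜 := ℝ) (0 : ℝ) (Y m)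
    · simpa only [hij, ne_eq, not_false_eq_true, if_true, map_smul] using
        (hasGradientAt_comp_norm_update_sub_sq hφ Y m i j).hasFDerivAt.const_mul (w i j)
  have hsum : ∑ i, ∑ j, w i j • ((if i = m then g j else 0) + if j = m then g i else 0) =
      ∑ j with j ≠ m, (2 * (w m j + w j m) * φ' (‖Y m - Y j‖ ^ 2)) • (Y m - Y j) := by
    calc
      _ = ∑ j, (w m j + w j m) • g j := by
        simp [smul_add, add_smul, Finset.sum_add_distrib]
      _ = ∑ j with j ≠ m, (w m j + w j m) • g j := by
        rw [Finset.sum_filter_of_ne]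
        rintro j - hj rfl
        simp [hg] at hj
      _ = _ := by
        refine Finset.sum_congr rfl fun j _ => ?_
        rw [hg, smul_smul]
        congr 1
        ring
  rw [hasGradientAt_iff_hasFDerivAt, ← hsum]
  simp only [map_sum]
  exact HasFDerivAt.fun_sum fun i _ => HasFDerivAt.fun_sum fun j _ => hpair i j

end PairEnergyGradient

lemma hasDerivWithinAt_mul_lbd {β : ℝ → ℝ} {x : ℝ} (hx : 0 ≤ x)
    (hβ : DifferentiableWithinAt ℝ β (Set.Ici 0) x) (hβx : β x ≠ 0) :
    HasDerivWithinAt β (β x * lbd β x) (Set.Ici 0) x := by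
  rw [lbd, derivWithin.log hβ hβx (uniqueDiffOn_Ici 0 x hx), mul_div_cancel₀ _ hβx]
  exact hβ.hasDerivWithinAt

section Similarity

variable {E : Type*} [NormedAddCommGroup E] {n : ℕ} {β : ℝ → ℝ}

lemma pairZ_eq_pairEnergy (Y : Fin n → E) : pairZ β Y = pairEnergy 1 β Y := by
  simp [pairZ, pairEnergy]

lemma pairZ_pos (hβ : ∀ x, 0 ≤ x → 0 < β x) {i j : Fin n} (hij : i ≠ j) (Y : Fin n → E) :
    0 < pairZ β Y := by
  have hpos (k l : Fin n) : 0 < β (‖Y k - Y l‖ ^ 2) := hβ _ (sq_nonneg _)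
  have hnonneg (k l : Fin n) : 0 ≤ if k ≠ l then β (‖Y k - Y l‖ ^ 2) else 0 :=
    ite_nonneg (hpos k l).le le_rfl
  refine Finset.sum_pos' (fun k _ => Finset.sum_nonneg fun l _ => hnonneg k l)
    ⟨i, Finset.mem_univ i, Finset.sum_pos' (fun l _ => hnonneg i l) ⟨j, Finset.mem_univ j, ?_⟩⟩
  simpa [hij] using hpos i j

lemma relEntropy_eq_sub_pairEnergy_add_log_pairZ (hβ : ∀ x, 0 ≤ x → 0 < β x)
    {p : Fin n → Fin n → ℝ} (hp : ∀ i j, i ≠ j → 0 ≤ p i j) (Y : Fin n → E) :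
    relEntropy β p Y =
      (∑ i, ∑ j, if i ≠ j then p i j * Real.log (p i j) else 0)
        - pairEnergy p (fun x => Real.log (β x)) Y
        + (∑ i, ∑ j, if i ≠ j then p i j else 0) * Real.log (pairZ β Y) := by
  simp only [relEntropy, pairEnergy, Finset.sum_mul, ← Finset.sum_sub_distrib,
    ← Finset.sum_add_distrib]
  refine Finset.sum_congr rfl fun i _ => Finset.sum_congr rfl fun j _ => ?_
  rcases eq_or_ne i j with rfl | hij
  · simp
  rcases (hp i j hij).eq_or_lt with hp_zero | hp_pos
  · simp [← hp_zero]
  have hβ_ne : β (‖Y i - Y j‖ ^ 2) ≠ 0 := (hβ _ (sq_nonneg _)).ne'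
  have hZ_ne : pairZ β Y ≠ 0 := (pairZ_pos hβ hij Y).ne'
  simp only [if_pos hij, qfun]
  rw [Real.log_div hp_pos.ne' (div_ne_zero hβ_ne hZ_ne), Real.log_div hβ_ne hZ_ne]
  ring

end Similarity

section EntropyGradient

variable {E : Type*} [NormedAddCommGroup E] [InnerProductSpace ℝ E] [CompleteSpace E] {n : ℕ}
  {β : ℝ → ℝ}

lemma hasGradientAt_pairEnergy_log_update (hβ_ne : ∀ x, 0 ≤ x → β x ≠ 0)
    (hβ_diff : DifferentiableOn ℝ β (Set.Ici 0)) (p : Fin n → Fin n → ℝ) (Y : Fin n → E)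
    (m : Fin n) :
    HasGradientAt (fun y => pairEnergy p (fun x => Real.log (β x)) (Function.update Y m y))
      (∑ j with j ≠ m, (2 * (p m j + p j m) * lbd β (‖Y m - Y j‖ ^ 2)) • (Y m - Y j)) (Y m) :=
  hasGradientAt_pairEnergy_update
    (fun x hx => ((hβ_diff x hx).log (hβ_ne x hx)).hasDerivWithinAt) p Y m

lemma hasGradientAt_log_pairZ_update (hβ_ne : ∀ x, 0 ≤ x → β x ≠ 0)
    (hβ_diff : DifferentiableOn ℝ β (Set.Ici 0)) (Y : Fin n → E) (m : Fin n)
    (hZ : pairZ β Y ≠ 0) :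
    HasGradientAt (fun y => Real.log (pairZ β (Function.update Y m y)))
      (∑ j with j ≠ m, (4 * qfun β Y m j * lbd β (‖Y m - Y j‖ ^ 2)) • (Y m - Y j)) (Y m) := by
  have hβ_deriv (x : ℝ) (hx : 0 ≤ x) := hasDerivWithinAt_mul_lbd hx (hβ_diff x hx) (hβ_ne x hx)
  have hlog := (hasGradientAt_pairEnergy_update hβ_deriv 1 Y m).hasFDerivAt.log
    (by simpa [← pairZ_eq_pairEnergy] using hZ)
  simp only [← pairZ_eq_pairEnergy, Function.update_eq_self] at hlog
  refine hlog.congr_fderiv ?_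
  rw [← map_smul, Finset.smul_sum]
  congr 1
  refine Finset.sum_congr rfl fun j _ => ?_
  rw [smul_smul, qfun]
  congr 1
  simp only [Pi.one_apply]
  ring

theorem gradient_of_relative_entropy_general
    {p : Fin n → Fin n → ℝ} (hp_nonneg : ∀ i j, i ≠ j → 0 ≤ p i j)
    (hp_sum : (∑ i, ∑ j, if i ≠ j then p i j else (0 : ℝ)) = 1)
    (hβ_pos : ∀ x, 0 ≤ x → 0 < β x) (hβ_diff : DifferentiableOn ℝ β (Set.Ici 0))
    (Y : Fin n → E) (m : Fin n) :
    HasGradientAt (fun y => relEntropy β p (Function.update Y m y))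
      (∑ j with j ≠ m,
        (-4 * ((p m j + p j m) / 2 - qfun β Y m j) * lbd β (‖Y m - Y j‖ ^ 2)) • (Y m - Y j))
      (Y m) := by
  have hZ : pairZ β Y ≠ 0 := by
    obtain ⟨i, -, hi⟩ := Finset.exists_ne_zero_of_sum_ne_zero (hp_sum.trans_ne one_ne_zero)
    obtain ⟨j, -, hij⟩ := Finset.exists_ne_zero_of_sum_ne_zero hi
    exact (pairZ_pos hβ_pos (ite_ne_right_iff.mp hij).1 Y).ne'
  have hβ_ne (x : ℝ) (hx : 0 ≤ x) : β x ≠ 0 := (hβ_pos x hx).ne'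
  have hcross := hasGradientAt_pairEnergy_log_update hβ_ne hβ_diff p Y m
  have hlogZ := hasGradientAt_log_pairZ_update hβ_ne hβ_diff Y m hZ
  simp only [relEntropy_eq_sub_pairEnergy_add_log_pairZ hβ_pos hp_nonneg, hp_sum, one_mul]
  refine ((hcross.hasFDerivAt.const_sub _).add hlogZ.hasFDerivAt).congr_fderiv ?_
  rw [← map_neg, ← map_add, ← Finset.sum_neg_distrib, ← Finset.sum_add_distrib]
  congr 1
  refine Finset.sum_congr rfl fun j _ => ?_
  rw [← neg_smul, ← add_smul]
  congr 1
  ring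

end EntropyGradient

/-- **Section 2.** The gradient of the relative entropy with respect to the point `y_m` is
`∇_{y_m} C(Y) = -4 Σ_{j ≠ m} (p_{mj} - q_{mj}(Y)) (y_m - y_j) (log β)'(|y_m - y_j|²)`,
so the gradient flow of `C` is the system (1.3). -/
theorem gradient_of_relative_entropy
    (s n : ℕ) (hs : 1 ≤ s) (hn : s + 1 < n)
    (p : Fin n → Fin n → ℝ)
    (hsymm : ∀ i j, p i j = p j i)
    (hppos : ∀ i j, i ≠ j → 0 < p i j)
    (hpsum : (∑ i, ∑ j, if i ≠ j then p i j else (0 : ℝ)) = 1)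
    (β : ℝ → ℝ)
    (hβpos : ∀ x, 0 ≤ x → 0 < β x)
    (hβsmooth : ContDiffOn ℝ (⊤ : ℕ∞) β (Set.Ici 0))
    (hβanti : AntitoneOn β (Set.Ici 0))
    (hβbdd : ∃ M : ℝ, ∀ x, 0 ≤ x → |lbd β x| ≤ M)
    (Y : Fin n → EuclideanSpace ℝ (Fin s)) (m : Fin n) :
    HasGradientAt (fun y => relEntropy β p (Function.update Y m y))
      (∑ j ∈ Finset.univ.filter (· ≠ m),
        (-4 * (p m j - qfun β Y m j) * lbd β (‖Y m - Y j‖ ^ 2)) • (Y m - Y j))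
      (Y m) := by
  simpa only [hsymm _ m, add_self_div_two] using
    gradient_of_relative_entropy_general (fun i j hij => (hppos i j hij).le) hpsum hβpos
      (hβsmooth.differentiableOn (by simp)) Y m
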